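/- Let E be a rank two vector bundle on P^n arising from a monad 0 → A → P → B → 0 with A, B free, and suppose H^l_*(E) = 0 for some l with 2 ≤ l ≤ n-2. Then H^l_*(Λ²P) = 0. -/

import Mathlib

/-!
Background setup (the paper works on projective space `ℙⁿ` over a field `K`):
we encode a coherent sheaf on `ℙⁿ_K` by a module `M` over the homogeneous coordinate
ring `S = K[X₀,…,Xₙ]` (namely `M = Γ_*` of the sheaf), and the intermediate cohomology
module `H^i_*(F) = ⊕_ν H^i(ℙⁿ, F(ν))` (for `i ≥ 1`) by the local cohomology module
`H^{i+1}_𝔪(M)` at the irrelevant maximal ideal `𝔪 = (X₀,…,Xₙ)`, to which it is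
canonically isomorphic.
-/

open CategoryTheory TensorProduct

noncomputable section

/-- The homogeneous coordinate ring `S = K[X₀,…,Xₙ]` of `ℙⁿ`. -/
abbrev PolyS (K : Type) [Field K] (n : ℕ) : Type := MvPolynomial (Fin (n+1)) K

variable (K : Type) [Field K] (n : ℕ)

/-- The irrelevant maximal ideal `𝔪 = (X₀,…,Xₙ)` of `S`. -/
def irrel : Ideal (PolyS K n) := Ideal.span (Set.range MvPolynomial.X)

/-- `H^i_*` of the sheaf on `ℙⁿ` associated to the `S`-module `M`, encoded (for `i ≥ 1`)
as the local cohomology module `H^{i+1}_𝔪(M)`. -/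
def Hstar (i : ℕ) (M : Type) [AddCommGroup M] [Module (PolyS K n) M] :
    ModuleCat (PolyS K n) :=
  (localCohomology (irrel K n) (i+1)).obj (ModuleCat.of (PolyS K n) M)

/-- `M` is (the module of sections `Γ_*` of) an algebraic vector bundle on `ℙⁿ`:
finitely generated, depth `≥ 2` at `𝔪` (i.e. `H⁰_𝔪(M) = H¹_𝔪(M) = 0`, so `M = Γ_*(M̃)`),
and locally free at every prime other than the irrelevant ideal. -/
structure IsBundleModule (M : Type) [AddCommGroup M] [Module (PolyS K n) M] : Prop where
  finite : Module.Finite (PolyS K n) M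
  h0 : Subsingleton ((localCohomology (irrel K n) 0).obj (ModuleCat.of (PolyS K n) M))
  h1 : Subsingleton ((localCohomology (irrel K n) 1).obj (ModuleCat.of (PolyS K n) M))
  locFree : ∀ p : PrimeSpectrum (PolyS K n), p.asIdeal ≠ irrel K n →
    Module.Free (Localization.AtPrime p.asIdeal) (LocalizedModule p.asIdeal.primeCompl M)

/-- `M` represents a vector bundle of rank two on `ℙⁿ`. -/
structure IsRankTwoBundleModule (M : Type) [AddCommGroup M] [Module (PolyS K n) M]
    extends IsBundleModule K n M : Prop where
  rank2 : ∀ p : PrimeSpectrum (PolyS K n), p.asIdeal ≠ irrel K n →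
    Module.rank (Localization.AtPrime p.asIdeal) (LocalizedModule p.asIdeal.primeCompl M) = 2

/-- A finite length module which is moreover supported at the irrelevant ideal: the
(ungraded avatar of the) notion of a *graded* `S`-module of finite length. -/
def IsGradedFiniteLength (N : Type) [AddCommGroup N] [Module (PolyS K n) N] : Prop :=
  IsFiniteLength (PolyS K n) N ∧
    ∃ c : ℕ, (irrel K n) ^ c ≤ Module.annihilator (PolyS K n) N

/-- The cohomology `ker β / im α` of a monad `A --α--> P --β--> B`. -/
def MonadHomology {R A P B : Type} [CommRing R] [AddCommGroup A] [Module R A]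
    [AddCommGroup P] [Module R P] [AddCommGroup B] [Module R B]
    (α : A →ₗ[R] P) (β : P →ₗ[R] B) : Type :=
  ↥(LinearMap.ker β) ⧸ (LinearMap.range α).comap (LinearMap.ker β).subtype

instance {R A P B : Type} [CommRing R] [AddCommGroup A] [Module R A]
    [AddCommGroup P] [Module R P] [AddCommGroup B] [Module R B]
    (α : A →ₗ[R] P) (β : P →ₗ[R] B) : AddCommGroup (MonadHomology α β) := by
  unfold MonadHomology; infer_instance

instance {R A P B : Type} [CommRing R] [AddCommGroup A] [Module R A]
    [AddCommGroup P] [Module R P] [AddCommGroup B] [Module R B]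
    (α : A →ₗ[R] P) (β : P →ₗ[R] B) : Module R (MonadHomology α β) := by
  unfold MonadHomology; infer_instance

/-- A linear map of `S`-modules which becomes an isomorphism of the associated sheaves
on `ℙⁿ`: its kernel and cokernel are annihilated by a power of the irrelevant ideal. -/
def IsSheafIso {M N' : Type} [AddCommGroup M] [Module (PolyS K n) M]
    [AddCommGroup N'] [Module (PolyS K n) N'] (f : M →ₗ[PolyS K n] N') : Prop :=
  (∃ c : ℕ, (irrel K n) ^ c ≤ Module.annihilator (PolyS K n) ↥(LinearMap.ker f)) ∧
  (∃ c : ℕ, (irrel K n) ^ c ≤ Module.annihilator (PolyS K n) (N' ⧸ LinearMap.range f))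


namespace W2
open Opposite Limits

section bridge
variable {R : Type} [CommRing R]

/-- the functor `Hom(-, Y)` -/
abbrev FY (Y : ModuleCat.{0} R) : ModuleCat.{0} R ⥤ (ModuleCat.{0} R)ᵒᵖ :=
  ((linearYoneda R (ModuleCat.{0} R)).obj Y).rightOp

abbrev KC {X : ModuleCat.{0} R} (P : ProjectiveResolution X) (Y : ModuleCat.{0} R) :
    HomologicalComplex (ModuleCat.{0} R)ᵒᵖ (ComplexShape.down ℕ) :=
  ((FY Y).mapHomologicalComplex _).obj P.complex

/-- relation between cocycles and old Ext elements. -/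
def Rel {X : ModuleCat.{0} R} (P : ProjectiveResolution X) (Y : ModuleCat.{0} R) (n : ℕ)
    (f : P.complex.X n ⟶ Y) (x : ((Ext R (ModuleCat.{0} R) n).obj (op X)).obj Y) : Prop :=
  ∃ z : ((KC P Y).opcycles n).unop,
    ((KC P Y).pOpcycles n).unop z = f ∧
    (P.isoLeftDerivedObj (FY Y) n).hom.unop (((KC P Y).homologyι n).unop z) = x

lemma Rel.map {X X' : ModuleCat.{0} R} {P : ProjectiveResolution X} {P' : ProjectiveResolution X'}
    {Y : ModuleCat.{0} R} {n : ℕ} {f : P.complex.X n ⟶ Y}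
    {x : ((Ext R (ModuleCat.{0} R) n).obj (op X)).obj Y} (h : Rel P Y n f x)
    (g : X' ⟶ X) (φ : P'.complex ⟶ P.complex) (comm : φ.f 0 ≫ P.π.f 0 = P'.π.f 0 ≫ g) :
    Rel P' Y n (φ.f n ≫ f) ((((Ext R (ModuleCat.{0} R) n).map g.op).app Y) x) := by
  obtain ⟨z, hz1, hz2⟩ := h
  let Φ : KC P' Y ⟶ KC P Y := ((FY Y).mapHomologicalComplex _).map φ
  refine ⟨(HomologicalComplex.opcyclesMap Φ n).unop z, ?_, ?_⟩
  · have := congrArg Quiver.Hom.unop (HomologicalComplex.p_opcyclesMap Φ n)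
    have := ConcreteCategory.congr_hom this z
    simp only [unop_comp, ConcreteCategory.comp_apply] at this
    rw [this, hz1]
    rfl
  · have h1 := congrArg Quiver.Hom.unop (HomologicalComplex.homologyι_naturality Φ n)
    have h1 := ConcreteCategory.congr_hom h1 z
    simp only [unop_comp, ConcreteCategory.comp_apply] at h1
    have h2 := congrArg Quiver.Hom.unop
      (ProjectiveResolution.isoLeftDerivedObj_hom_naturality g P' P φ comm (FY Y) n)
    have h2 := ConcreteCategory.congr_hom h2 (((KC P Y).homologyι n).unop z)
    have h3 := congrArg (fun y => (((FY Y).leftDerived n).map g).unop y) hz2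
    refine Eq.trans ?_ (Eq.trans h2.symm h3)
    exact congrArg (fun y => (P'.isoLeftDerivedObj (FY Y) n).hom.unop y) h1.symm

lemma Rel.zero_iff {X : ModuleCat.{0} R} {P : ProjectiveResolution X}
    {Y : ModuleCat.{0} R} {n : ℕ} {f : P.complex.X (n+1) ⟶ Y}
    {x : ((Ext R (ModuleCat.{0} R) (n+1)).obj (op X)).obj Y} (h : Rel P Y (n+1) f x) :
    x = 0 ↔ ∃ g : P.complex.X n ⟶ Y, P.complex.d (n+1) n ≫ g = f := by
  obtain ⟨z, hz1, hz2⟩ := h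
  have hex : (ShortComplex.mk ((KC P Y).homologyι (n+1)) ((KC P Y).fromOpcycles (n+1) n)
      (by simp)).Exact := ShortComplex.exact_of_f_is_kernel _
        ((KC P Y).homologyIsKernel (n+1) n (by simp))
  have hex' := hex.unop
  rw [ShortComplex.moduleCat_exact_iff] at hex'
  have hmono : Function.Injective (((KC P Y).pOpcycles (n+1)).unop) := by
    rw [← ModuleCat.mono_iff_injective]; infer_instance
  have hiso : Function.Injective ((P.isoLeftDerivedObj (FY Y) (n+1)).hom.unop) := by
    rw [← ModuleCat.mono_iff_injective]; infer_instance
  have key : ∀ g : P.complex.X n ⟶ Y, ((KC P Y).pOpcycles (n+1)).unop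
      (((KC P Y).fromOpcycles (n+1) n).unop g) = P.complex.d (n+1) n ≫ g := by
    intro g
    have h1 := congrArg Quiver.Hom.unop ((KC P Y).p_fromOpcycles (n+1) n)
    have h1 := ConcreteCategory.congr_hom h1 g
    exact h1
  constructor
  · intro hx
    have : ((KC P Y).homologyι (n+1)).unop z = 0 := by
      apply hiso
      refine Eq.trans (hz2.trans hx) (Eq.symm ?_)
      exact map_zero (P.isoLeftDerivedObj (FY Y) (n+1)).hom.unop.hom
    obtain ⟨g, hg⟩ := hex' z this
    refine ⟨g, ?_⟩
    rw [← hz1, ← hg]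
    exact (key g).symm
  · rintro ⟨g, hg⟩
    have : z = ((KC P Y).fromOpcycles (n+1) n).unop g := by
      apply hmono
      rw [hz1, key, hg]
    rw [← hz2, this]
    have h1 := congrArg Quiver.Hom.unop ((KC P Y).homologyι_comp_fromOpcycles (n+1) n)
    have h1 := ConcreteCategory.congr_hom h1 g
    refine Eq.trans (congrArg (fun y => (P.isoLeftDerivedObj (FY Y) (n+1)).hom.unop y) h1) ?_
    exact map_zero (P.isoLeftDerivedObj (FY Y) (n+1)).hom.unop.hom

lemma Rel.exists_right {X : ModuleCat.{0} R} (P : ProjectiveResolution X)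
    {Y : ModuleCat.{0} R} {n : ℕ} (f : P.complex.X n ⟶ Y) (hf : P.complex.d (n+1) n ≫ f = 0) :
    ∃ x, Rel P Y n f x := by
  have hex : (ShortComplex.mk ((KC P Y).d (n+1) n) ((KC P Y).pOpcycles n)
      ((KC P Y).d_pOpcycles (n+1) n)).Exact := ShortComplex.exact_of_g_is_cokernel _
        ((KC P Y).opcyclesIsCokernel (n+1) n (by simp))
  have hex' := hex.unop
  rw [ShortComplex.moduleCat_exact_iff] at hex'
  obtain ⟨z, hz⟩ := hex' f hf
  exact ⟨_, z, hz, rfl⟩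

lemma Rel.exists_left {X : ModuleCat.{0} R} (P : ProjectiveResolution X)
    {Y : ModuleCat.{0} R} {n : ℕ} (x : ((Ext R (ModuleCat.{0} R) n).obj (op X)).obj Y) :
    ∃ f : P.complex.X n ⟶ Y, P.complex.d (n+1) n ≫ f = 0 ∧ Rel P Y n f x := by
  have hiso : Function.Surjective ((P.isoLeftDerivedObj (FY Y) n).hom.unop) := by
    rw [← ModuleCat.epi_iff_surjective]; infer_instance
  have hepi : Function.Surjective (((KC P Y).homologyι n).unop) := by
    rw [← ModuleCat.epi_iff_surjective]; infer_instance
  obtain ⟨y, rfl⟩ := hiso x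
  obtain ⟨z, rfl⟩ := hepi y
  refine ⟨((KC P Y).pOpcycles n).unop z, ?_, z, rfl, rfl⟩
  have h1 := congrArg Quiver.Hom.unop ((KC P Y).d_pOpcycles (n+1) n)
  have h1 := ConcreteCategory.congr_hom h1 z
  exact h1

/-- projection `R/I → R/J` for `I ≤ J`. -/
def prj {I J : Ideal R} (h : I ≤ J) : ModuleCat.of R (R ⧸ I) ⟶ ModuleCat.of R (R ⧸ J) :=
  ModuleCat.ofHom (Submodule.mapQ I J LinearMap.id h)

lemma old_iff (J : Ideal R) (i : ℕ) (M : ModuleCat.{0} R) :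
    Subsingleton ((localCohomology J i).obj M) ↔
    ∀ t : ℕ, ∀ x : ((Ext R (ModuleCat.{0} R) i).obj (op (ModuleCat.of R (R ⧸ J ^ t)))).obj M,
      ∃ s : ℕ, ∃ h : t ≤ s, ((Ext R (ModuleCat.{0} R) i).map
        (prj (Ideal.pow_le_pow_right (I := J) h)).op).app M x = 0 := by
  let D := localCohomology.diagram (localCohomology.idealPowersDiagram J) i
  have hc := isColimitOfPreserves ((evaluation _ _).obj M) (colimit.isColimit D)
  have e : ((localCohomology J i).obj M) =
    (((evaluation (ModuleCat.{0} R) (ModuleCat.{0} R)).obj M).mapCocone (colimit.cocone D)).pt := rfl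
  constructor
  · intro hs t x
    have h0 : ((((evaluation _ _).obj M).mapCocone (colimit.cocone D)).ι.app (op (op t)))
        (show ToType ((D ⋙ ((evaluation _ _).obj M)).obj (op (op t))) from x) =
        ((((evaluation _ _).obj M).mapCocone (colimit.cocone D)).ι.app (op (op t)))
        (show ToType ((D ⋙ ((evaluation _ _).obj M)).obj (op (op t))) from
          (0 : ((Ext R (ModuleCat.{0} R) i).obj (op (ModuleCat.of R (R ⧸ J ^ t)))).obj M)) :=
      hs.elim _ _
    rw [Concrete.isColimit_rep_eq_iff_exists _ hc] at h0
    obtain ⟨k, f, g, h⟩ := h0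
    refine ⟨k.unop.unop, f.unop.unop.down.down, ?_⟩
    refine Eq.trans h ?_
    exact map_zero ((D ⋙ ((evaluation _ _).obj M)).map g).hom
  · intro H
    have : ∀ y : (((evaluation (ModuleCat.{0} R) (ModuleCat.{0} R)).obj M).mapCocone (colimit.cocone D)).pt, y = 0 := by
      intro y
      obtain ⟨j, x, rfl⟩ := Concrete.isColimit_exists_rep _ hc y
      obtain ⟨s, h, hx⟩ := H j.unop.unop x
      let g : j ⟶ op (op s) := (homOfLE h).op.op
      have := (((evaluation _ _).obj M).mapCocone (colimit.cocone D)).w g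
      rw [← this, ConcreteCategory.comp_apply]
      have h2 : (D ⋙ ((evaluation _ _).obj M)).map g x = 0 := hx
      rw [h2, map_zero]
    exact ⟨fun a b => (this a).trans (this b).symm⟩

/-- vanishing of local cohomology, expressed with `Abelian.Ext`. -/
lemma bridge (J : Ideal R) (i : ℕ) (M : ModuleCat.{0} R) :
    Subsingleton ((localCohomology J (i+1)).obj M) ↔
    ∀ t : ℕ, ∀ x : Abelian.Ext (ModuleCat.of R (R ⧸ J ^ t)) M (i+1),
      ∃ s : ℕ, ∃ h : t ≤ s,
        (Abelian.Ext.mk₀ (prj (Ideal.pow_le_pow_right (I := J) h))).comp x (zero_add _) = 0 := by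
  rw [old_iff]
  let P : ∀ t : ℕ, ProjectiveResolution (ModuleCat.of R (R ⧸ J ^ t)) := fun t =>
    projectiveResolution _
  have lifts : ∀ t s : ℕ, ∀ h : t ≤ s,
      ∀ (f : (P t).complex.X (i+1) ⟶ M) (hf : (P t).complex.d (i+1+1) (i+1) ≫ f = 0)
      (x) (_ : Rel (P t) M (i+1) f x),
      ((Ext R (ModuleCat.{0} R) (i+1)).map
        (prj (Ideal.pow_le_pow_right (I := J) h)).op).app M x = 0 ↔
      (Abelian.Ext.mk₀ (prj (Ideal.pow_le_pow_right (I := J) h))).comp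
        ((P t).extMk f _ rfl hf) (zero_add _) = 0 := by
    intro t s h f hf x hx
    let g := prj (Ideal.pow_le_pow_right (I := J) h)
    let φ := ProjectiveResolution.lift g (P s) (P t)
    have comm : φ.f 0 ≫ (P t).π.f 0 = (P s).π.f 0 ≫ g :=
      ProjectiveResolution.lift_commutes_zero g (P s) (P t)
    let φ' : ProjectiveResolution.Hom (P s) (P t) g := ⟨φ, by simpa using comm⟩
    have h1 := (hx.map g φ comm).zero_iff
    rw [show prj (Ideal.pow_le_pow_right (I := J) h) = g from rfl, h1,
      ProjectiveResolution.mk₀_comp_extMk f _ rfl hf φ',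
      ProjectiveResolution.extMk_eq_zero_iff _ _ _ _ _ i rfl]
  constructor
  · intro H t x
    obtain ⟨f, hf, rfl⟩ := (P t).extMk_surjective x (i+1+1) rfl
    obtain ⟨x, hx⟩ := Rel.exists_right (P t) f hf
    obtain ⟨s, h, hs⟩ := H t x
    exact ⟨s, h, (lifts t s h f hf x hx).1 hs⟩
  · intro H t x
    obtain ⟨f, hf, hx⟩ := Rel.exists_left (P t) x
    obtain ⟨s, h, hs⟩ := H t ((P t).extMk f _ rfl hf)
    exact ⟨s, h, (lifts t s h f hf x hx).2 hs⟩

end bridge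
end W2

namespace W2
open Opposite

section VV
variable {R : Type} [CommRing R] (J : Ideal R)

/-- inclusion of ideals as a morphism of modules. -/
def inc {I J : Ideal R} (h : I ≤ J) : ModuleCat.of R I ⟶ ModuleCat.of R J :=
  ModuleCat.ofHom (Submodule.inclusion h)

lemma inc_comp {I J K : Ideal R} (h : I ≤ J) (h' : J ≤ K) : inc h ≫ inc h' = inc (h.trans h') := rfl

/-- `colim_t Ext^i(J^t, M) = 0`. -/
def V (i : ℕ) (M : Type) [AddCommGroup M] [Module R M] : Prop :=
  ∀ t : ℕ, ∀ x : Abelian.Ext (ModuleCat.of R (J ^ t : Ideal R)) (ModuleCat.of R M) i,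
    ∃ s : ℕ, ∃ h : t ≤ s,
      (Abelian.Ext.mk₀ (inc (Ideal.pow_le_pow_right (I := J) h))).comp x (zero_add _) = 0

/-- the short complex `0 → I → R → R/I → 0` -/
abbrev sesI (I : Ideal R) : ShortComplex (ModuleCat.{0} R) :=
  ShortComplex.mk (ModuleCat.ofHom I.subtype) (ModuleCat.ofHom I.mkQ) (by
    ext x; exact Ideal.Quotient.eq_zero_iff_mem.2 x.2)

/-- short exactness from linear maps -/
lemma ses_of {M' M M'' : Type} [AddCommGroup M'] [Module R M'] [AddCommGroup M] [Module R M]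
    [AddCommGroup M''] [Module R M''] (f : M' →ₗ[R] M) (g : M →ₗ[R] M'')
    (w : ModuleCat.ofHom f ≫ ModuleCat.ofHom g = 0)
    (hf : Function.Injective f) (hg : Function.Surjective g) (hfg : Function.Exact f g) :
    (ShortComplex.mk (ModuleCat.ofHom f) (ModuleCat.ofHom g) w).ShortExact where
  exact := by
    rw [ShortComplex.moduleCat_exact_iff]
    intro x hx
    exact (hfg x).1 hx
  mono_f := (ModuleCat.mono_iff_injective _).2 hf
  epi_g := (ModuleCat.epi_iff_surjective _).2 hg

lemma sesI_exact (I : Ideal R) : (sesI I).ShortExact :=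
  ses_of _ _ _ I.injective_subtype I.mkQ_surjective (by
    intro x
    rw [Submodule.mkQ_apply, Submodule.Quotient.mk_eq_zero]
    simp)

/-- morphism of the above short exact sequences -/
def sesIMap {I J : Ideal R} (h : I ≤ J) : sesI I ⟶ sesI J where
  τ₁ := inc h
  τ₂ := 𝟙 _
  τ₃ := prj h
  comm₁₂ := rfl
  comm₂₃ := rfl

instance : Projective (ModuleCat.of R R) := ModuleCat.projective_of_free (Module.Basis.singleton Unit R)

open Abelian.Ext in
lemma bridgeV (i : ℕ) (M : Type) [AddCommGroup M] [Module R M] :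
    Subsingleton ((localCohomology J (i+1+1)).obj (ModuleCat.of R M)) ↔ V J (i+1) M := by
  rw [bridge]
  have nat : ∀ {t s : ℕ} (h : t ≤ s) (x : Abelian.Ext (ModuleCat.of R (J ^ t : Ideal R)) (ModuleCat.of R M) (i+1)),
      (mk₀ (prj (Ideal.pow_le_pow_right (I := J) h))).comp
        ((sesI_exact (J^t)).extClass.comp x (add_comm 1 (i+1))) (zero_add _) =
      (sesI_exact (J^s)).extClass.comp
        ((mk₀ (inc (Ideal.pow_le_pow_right (I := J) h))).comp x (zero_add _)) (add_comm 1 (i+1)) := by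
    intro t s h x
    have := ShortComplex.ShortExact.extClass_naturality (sesI_exact (J^s)) (sesI_exact (J^t))
      (sesIMap (Ideal.pow_le_pow_right h))
    have h2 := congrArg (fun y => Abelian.Ext.comp y x (add_comm 1 (i+1))) this
    dsimp only at h2
    rw [comp_assoc _ _ _ (add_zero 1) (zero_add _) (by omega),
      comp_assoc _ _ _ (zero_add 1) (add_comm _ _) (by omega)] at h2
    exact h2.symm
  constructor
  · intro H t x
    obtain ⟨s, h, hs⟩ := H t ((sesI_exact (J^t)).extClass.comp x (add_comm 1 (i+1)))
    refine ⟨s, h, ?_⟩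
    have hs := (nat h x).symm.trans hs
    obtain ⟨y, hy⟩ := contravariant_sequence_exact₁ (sesI_exact (J^s)) _ _ _ hs
    have : Subsingleton (Abelian.Ext (sesI (J^s)).X₂ (ModuleCat.of R M) (i+1)) :=
      subsingleton_of_projective (ModuleCat.of R R) _ _
    rw [← hy, Subsingleton.elim y 0, comp_zero]
  · intro H t x
    have : Subsingleton (Abelian.Ext (sesI (J^t)).X₂ (ModuleCat.of R M) (i+1+1)) :=
      subsingleton_of_projective (ModuleCat.of R R) _ _
    obtain ⟨y, hy⟩ := contravariant_sequence_exact₃ (sesI_exact (J^t)) (ModuleCat.of R M) x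
      (Subsingleton.elim _ _) (add_comm 1 (i+1))
    obtain ⟨s, h, hs⟩ := H t y
    refine ⟨s, h, ?_⟩
    rw [← hy]
    refine (nat h y).trans ?_
    rw [hs, comp_zero]

/-- every element is killed by a power of `J` -/
def Tors (N : Type) [AddCommGroup N] [Module R N] : Prop :=
  ∀ x : N, ∃ c : ℕ, ∀ a ∈ J ^ c, a • x = 0

variable {J}

section les
variable {M' M M'' : Type} [AddCommGroup M'] [Module R M'] [AddCommGroup M] [Module R M]
    [AddCommGroup M''] [Module R M''] (f : M' →ₗ[R] M) (g : M →ₗ[R] M'')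
    (hf : Function.Injective f) (hg : Function.Surjective g) (hfg : Function.Exact f g)

include hfg in
lemma ses_w : ModuleCat.ofHom f ≫ ModuleCat.ofHom g = 0 := by
  ext x
  exact hfg.apply_apply_eq_zero x

open Abelian.Ext

include hf hg hfg

lemma V_mid {i : ℕ} (h1 : V J i M') (h2 : V J i M'') : V J i M := by
  intro t x
  have S := ses_of f g (ses_w f g hfg) hf hg hfg
  obtain ⟨s, h, hs⟩ := h2 t (x.comp (mk₀ (ModuleCat.ofHom g)) (add_zero _))
  rw [← comp_assoc _ _ _ (zero_add _) (add_zero _) (by omega)] at hs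
  obtain ⟨y, hy⟩ := covariant_sequence_exact₂ _ S _ hs
  obtain ⟨s', h', hs'⟩ := h1 s y
  refine ⟨s', h.trans h', ?_⟩
  rw [← inc_comp (Ideal.pow_le_pow_right h') (Ideal.pow_le_pow_right h), ← mk₀_comp_mk₀,
    comp_assoc _ _ _ (zero_add _) (zero_add _) (by omega), ← hy,
    ← comp_assoc _ _ _ (zero_add _) (add_zero _) (by omega), hs', zero_comp]

lemma V_right {i : ℕ} (h1 : V J i M) (h2 : V J (i+1) M') : V J i M'' := by
  intro t x
  have S := ses_of f g (ses_w f g hfg) hf hg hfg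
  obtain ⟨s, h, hs⟩ := h2 t (x.comp S.extClass rfl)
  rw [← comp_assoc _ _ _ (zero_add _) rfl (by omega)] at hs
  obtain ⟨y, hy⟩ := covariant_sequence_exact₃ _ S _ _ hs
  obtain ⟨s', h', hs'⟩ := h1 s y
  refine ⟨s', h.trans h', ?_⟩
  rw [← inc_comp (Ideal.pow_le_pow_right h') (Ideal.pow_le_pow_right h), ← mk₀_comp_mk₀,
    comp_assoc _ _ _ (zero_add _) (zero_add _) (by omega), ← hy,
    ← comp_assoc _ _ _ (zero_add _) (add_zero _) (by omega), hs', zero_comp]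

lemma V_left {i : ℕ} (h1 : V J i M'') (h2 : V J (i+1) M) : V J (i+1) M' := by
  intro t x
  have S := ses_of f g (ses_w f g hfg) hf hg hfg
  obtain ⟨s, h, hs⟩ := h2 t (x.comp (mk₀ (ModuleCat.ofHom f)) (add_zero _))
  rw [← comp_assoc _ _ _ (zero_add _) (add_zero _) (by omega)] at hs
  obtain ⟨y, hy⟩ := covariant_sequence_exact₁ _ S _ hs rfl
  obtain ⟨s', h', hs'⟩ := h1 s y
  refine ⟨s', h.trans h', ?_⟩
  rw [← inc_comp (Ideal.pow_le_pow_right h') (Ideal.pow_le_pow_right h), ← mk₀_comp_mk₀,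
    comp_assoc _ _ _ (zero_add _) (zero_add _) (by omega), ← hy,
    ← comp_assoc _ _ _ (zero_add _) rfl (by omega), hs', zero_comp]

end les

section tors
open Abelian.Ext

lemma Tors.ext_dies [IsNoetherianRing R] {N : Type} [AddCommGroup N] [Module R N] (hN : Tors J N)
    (i : ℕ) : ∀ (F : Type) [AddCommGroup F] [Module R F] [Module.Finite R F]
      (x : Abelian.Ext (ModuleCat.of R F) (ModuleCat.of R N) i),
      ∃ s : ℕ, ∀ (F' : Type) [AddCommGroup F'] [Module R F'] (f : F' →ₗ[R] F),
        LinearMap.range f ≤ J ^ s • (⊤ : Submodule R F) →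
        (mk₀ (ModuleCat.ofHom f)).comp x (zero_add _) = 0 := by
  induction i with
  | zero =>
    intro F _ _ _ x
    obtain ⟨g, rfl⟩ := (mk₀_bijective _ _).2 x
    -- finitely many generators
    obtain ⟨S, hS⟩ := (Module.Finite.fg_top : (⊤ : Submodule R F).FG)
    choose c hc using hN
    refine ⟨S.sup (fun y => c (g y)), ?_⟩
    intro F' _ _ f hf
    rw [mk₀_comp_mk₀]
    have : ModuleCat.ofHom f ≫ g = 0 := by
      ext y
      have hy : f y ∈ J ^ (S.sup (fun y => c (g y))) • (⊤ : Submodule R F) := hf ⟨y, rfl⟩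
      have key : J ^ (S.sup (fun y => c (g y))) • (⊤ : Submodule R F) ≤ LinearMap.ker g.hom := by
        rw [← hS, Submodule.smul_le]
        intro r hr m hm
        have : Submodule.span R (S : Set F) ≤ LinearMap.ker (r • g.hom) := by
          rw [Submodule.span_le]
          intro z hz
          have hle : c (g z) ≤ S.sup (fun y => c (g y)) := Finset.le_sup (f := fun y => c (g y)) hz
          exact hc (g z) r (Ideal.pow_le_pow_right hle hr)
        have := this hm
        simpa using this
      exact key hy
    rw [this, mk₀_zero]
  | succ i ih =>
    intro F _ _ _ x
    obtain ⟨k, π, hπ⟩ := Module.Finite.exists_fin' R F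
    let F0 := Fin k → R
    let F1 := LinearMap.ker π
    have w := ses_w F1.subtype π (LinearMap.exact_subtype_ker_map π)
    have S := ses_of F1.subtype π w F1.injective_subtype hπ (LinearMap.exact_subtype_ker_map π)
    have : Projective (ModuleCat.of R F0) := ModuleCat.projective_of_free (Pi.basisFun R (Fin k))
    have : Subsingleton (Abelian.Ext (ModuleCat.of R F0) (ModuleCat.of R N) (i+1)) :=
      subsingleton_of_projective _ _ _
    obtain ⟨y, hy⟩ := contravariant_sequence_exact₃ S (ModuleCat.of R N) x
      (Subsingleton.elim (α := (Abelian.Ext (ModuleCat.of R F0) (ModuleCat.of R N) (i+1))) _ _) (add_comm 1 i)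
    obtain ⟨s, hs⟩ := ih F1 y
    obtain ⟨k0, hk0⟩ := Ideal.exists_pow_inf_eq_pow_smul J F1
    have hs' := hk0 (k0 + s) (by omega)
    set G : Submodule R F := J ^ (k0 + s) • ⊤ with hG
    set G0 : Submodule R F0 := J ^ (k0 + s) • ⊤ with hG0
    have hmap : G0.map π = G := by
      rw [hG0, Submodule.map_smul'', Submodule.map_top, LinearMap.range_eq_top.2 hπ]
    have hmem : ∀ z ∈ G0, π z ∈ G := fun z hz => hmap ▸ Submodule.mem_map_of_mem hz
    let π' : G0 →ₗ[R] G := π.restrict hmem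
    have hπ' : Function.Surjective π' := by
      rintro ⟨z, hz⟩
      rw [← hmap] at hz
      obtain ⟨z', hz', rfl⟩ := hz
      exact ⟨⟨z', hz'⟩, rfl⟩
    let K : Submodule R G0 := LinearMap.ker π'
    have hK : Function.Exact K.subtype π' := LinearMap.exact_subtype_ker_map π'
    have w' := ses_w (M' := K) (M := G0) (M'' := G) K.subtype π' hK
    have S' := ses_of (M' := K) (M := G0) (M'' := G) K.subtype π' w' K.injective_subtype hπ' hK
    let κ : K →ₗ[R] F1 := (G0.subtype.comp K.subtype).codRestrict F1 (by
      intro z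
      have := z.2
      exact congrArg Subtype.val this)
    have hκ : LinearMap.range κ ≤ J ^ s • (⊤ : Submodule R F1) := by
      rintro _ ⟨z, rfl⟩
      have h1 : (κ z : F0) ∈ J ^ (k0+s) • (⊤ : Submodule R F0) ⊓ F1 := ⟨z.1.2, (κ z).2⟩
      rw [hs'] at h1
      have h2 : (κ z : F0) ∈ J ^ s • F1 := by
        rw [Nat.add_sub_cancel_left] at h1
        exact Submodule.smul_mono le_rfl inf_le_right h1
      have h3 : J ^ s • F1 = (J ^ s • (⊤ : Submodule R F1)).map F1.subtype := by
        rw [Submodule.map_smul'', Submodule.map_top, Submodule.range_subtype]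
      rw [h3] at h2
      obtain ⟨u, hu, hu'⟩ := h2
      have : u = κ z := Subtype.ext hu'
      rwa [← this]
    have hz := hs K κ hκ
    let Φ : ShortComplex.mk _ _ w' ⟶ ShortComplex.mk _ _ w :=
      { τ₁ := ModuleCat.ofHom κ, τ₂ := ModuleCat.ofHom G0.subtype, τ₃ := ModuleCat.ofHom G.subtype,
        comm₁₂ := rfl, comm₂₃ := rfl }
    have nat := ShortComplex.ShortExact.extClass_naturality S' S Φ
    have h2 := congrArg (fun u => Abelian.Ext.comp u y (add_comm 1 i)) nat
    dsimp only at h2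
    rw [comp_assoc _ _ _ (add_zero 1) (zero_add _) (by omega),
      comp_assoc _ _ _ (zero_add 1) (add_comm _ _) (by omega)] at h2
    have h3 : (mk₀ (ModuleCat.ofHom G.subtype)).comp x (zero_add _) = 0 := by
      rw [← hy]
      refine h2.symm.trans ?_
      rw [show (mk₀ Φ.τ₁).comp y (zero_add _) = 0 from hz, comp_zero]
    refine ⟨k0 + s, ?_⟩
    intro F' _ _ f hf
    let f' : F' →ₗ[R] G := f.codRestrict G (fun z => hf ⟨z, rfl⟩)
    have : ModuleCat.ofHom f = ModuleCat.ofHom f' ≫ ModuleCat.ofHom G.subtype := rfl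
    rw [this, ← mk₀_comp_mk₀, comp_assoc _ _ _ (zero_add _) (zero_add _) (by omega), h3, comp_zero]

lemma Tors.V [IsNoetherianRing R] {N : Type} [AddCommGroup N] [Module R N] (hN : Tors J N)
    (i : ℕ) : V J i N := by
  intro t x
  obtain ⟨s, hs⟩ := hN.ext_dies i _ x
  refine ⟨t + s, by omega, ?_⟩
  apply hs
  rintro _ ⟨z, rfl⟩
  obtain ⟨z, hz⟩ := z
  have h3 : J ^ s • (J^t) = (J ^ s • (⊤ : Submodule R (J ^ t : Ideal R))).map (Submodule.subtype (J^t)) := by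
    rw [Submodule.map_smul'', Submodule.map_top, Submodule.range_subtype]
  have h4 : z ∈ J ^ s • (J^t) := by
    rw [smul_eq_mul, ← pow_add, add_comm]; exact hz
  rw [h3] at h4
  obtain ⟨u, hu, hu'⟩ := h4
  have h5 : Submodule.inclusion (Ideal.pow_le_pow_right (I := J) (Nat.le_add_right t s)) ⟨z, hz⟩ = u :=
    Subtype.ext hu'.symm
  exact h5 ▸ hu

lemma V_of_equiv {M N : Type} [AddCommGroup M] [Module R M] [AddCommGroup N] [Module R N]
    (e : M ≃ₗ[R] N) {i : ℕ} (h : V J i M) : V J i N := by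
  intro t x
  obtain ⟨s, h, hs⟩ := h t (x.comp (mk₀ (ModuleCat.ofHom e.symm.toLinearMap)) (add_zero _))
  refine ⟨s, h, ?_⟩
  rw [← comp_assoc _ _ _ (zero_add _) (add_zero _) (by omega)] at hs
  have h2 := congrArg (fun u => Abelian.Ext.comp u (mk₀ (ModuleCat.ofHom e.toLinearMap)) (add_zero _)) hs
  simp only [zero_comp] at h2
  rw [comp_assoc _ _ _ (add_zero _) (add_zero _) (by omega), mk₀_comp_mk₀] at h2
  have : ModuleCat.ofHom e.symm.toLinearMap ≫ ModuleCat.ofHom e.toLinearMap = 𝟙 (ModuleCat.of R N) := by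
    ext x; simp
  rwa [this, comp_mk₀_id] at h2

variable [IsNoetherianRing R]

/-- a map with torsion kernel and cokernel induces an equivalence of vanishing. -/
lemma V_iff_of_tors {M N : Type} [AddCommGroup M] [Module R M] [AddCommGroup N] [Module R N]
    (f : M →ₗ[R] N) (hk : Tors J (LinearMap.ker f)) (hc : Tors J (N ⧸ LinearMap.range f)) (i : ℕ) :
    V J (i+1) M ↔ V J (i+1) N := by
  have e1 : Function.Exact (LinearMap.ker f).subtype f.rangeRestrict := by
    intro x
    simp [Subtype.ext_iff]
  have e2 : Function.Exact (LinearMap.range f).subtype (LinearMap.range f).mkQ := by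
    intro x; simp
  constructor
  · intro h
    have h1 : V J (i+1) (LinearMap.range f) :=
      V_right _ _ (Submodule.injective_subtype _) f.surjective_rangeRestrict e1 h (hk.V _)
    exact V_mid _ _ (Submodule.injective_subtype _) (Submodule.mkQ_surjective _) e2 h1 (hc.V _)
  · intro h
    have h1 : V J (i+1) (LinearMap.range f) :=
      V_left _ _ (Submodule.injective_subtype _) (Submodule.mkQ_surjective _) e2 (hc.V _) h
    exact V_mid _ _ (Submodule.injective_subtype _) f.surjective_rangeRestrict e1 (hk.V _) h1

omit [IsNoetherianRing R] in
lemma V_subsingleton {M : Type} [AddCommGroup M] [Module R M] [Subsingleton M] (i : ℕ) : V J i M := by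
  intro t x
  refine ⟨t, le_rfl, ?_⟩
  have : x = x.comp (mk₀ (𝟙 _)) (add_zero _) := by simp
  rw [this]
  have : 𝟙 (ModuleCat.of R M) = 0 := by ext x; exact Subsingleton.elim _ _
  rw [this]; simp

omit [IsNoetherianRing R] in
lemma V_pi {M : Type} [AddCommGroup M] [Module R M] (i : ℕ) (h : V J i M) (k : ℕ) :
    V J i (Fin k → M) := by
  induction k with
  | zero => exact V_subsingleton i
  | succ k ih =>
    refine V_mid (LinearMap.single R (fun _ : Fin (k+1) => M) 0)
      (LinearMap.funLeft R M Fin.succ) (fun a b hab => by simpa using congrFun hab 0) ?_ ?_ h ih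
    · exact LinearMap.funLeft_surjective_of_injective _ _ _ (Fin.succ_injective k)
    · intro x
      constructor
      · intro hx
        refine ⟨x 0, ?_⟩
        ext j
        refine Fin.cases ?_ (fun j => ?_) j
        · simp
        · simpa using (congrFun hx j).symm
      · rintro ⟨y, rfl⟩
        ext j
        simp [LinearMap.funLeft_apply]

end tors
end VV
end W2

namespace W2

section freeV
variable {K : Type} [Field K] {n : ℕ}

open MvPolynomial in
lemma X_mul_mem {σ : Type} {s : Set σ} {j : σ} (hj : j ∉ s) {p : MvPolynomial σ K}
    (h : X j * p ∈ Ideal.span (X '' s)) : p ∈ Ideal.span ((X : σ → MvPolynomial σ K) '' s) := by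
  rw [mem_ideal_span_X_image] at h ⊢
  intro m hm
  obtain ⟨i, hi, hi'⟩ := h (Finsupp.single j 1 + m) (by
    rw [mem_support_iff] at hm ⊢
    rwa [coeff_X_mul])
  refine ⟨i, hi, ?_⟩
  have : j ≠ i := fun h => hj (h ▸ hi)
  simpa [Finsupp.single_apply, this] using hi'

open RingTheory.Sequence in
lemma X_regular : IsRegular (PolyS K n) ((List.finRange (n+1)).map (MvPolynomial.X (R := K))) := by
  have hof : ∀ L : List (Fin (n+1)), Ideal.ofList (L.map (MvPolynomial.X (R := K))) • (⊤ : Submodule (PolyS K n) (PolyS K n)) =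
      Ideal.span (MvPolynomial.X '' {i | i ∈ L}) := by
    intro L
    rw [smul_eq_mul, Ideal.mul_top]
    unfold Ideal.ofList
    congr 1
    ext x; simp
  constructor
  · constructor
    intro i hi
    rw [← List.map_take, hof]
    rw [isSMulRegular_iff_right_eq_zero_of_smul]
    intro x hx
    obtain ⟨x, rfl⟩ := Submodule.Quotient.mk_surjective _ x
    rw [← Submodule.Quotient.mk_smul, Submodule.Quotient.mk_eq_zero] at hx
    rw [Submodule.Quotient.mk_eq_zero]
    refine X_mul_mem (j := (List.finRange (n+1))[i]'(by simpa using hi)) ?_ (by simpa using hx)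
    intro hmem
    simp only [Set.mem_ofPred_eq, List.mem_take_iff_getElem] at hmem
    obtain ⟨j, hj, hj'⟩ := hmem
    simp at hj'
    omega
  · rw [hof]
    intro h
    have h1 : (1 : PolyS K n) ∈ Ideal.span (MvPolynomial.X '' {i | i ∈ List.finRange (n+1)}) := by
      rw [← h]; trivial
    rw [MvPolynomial.mem_ideal_span_X_image] at h1
    obtain ⟨i, _, hi⟩ := h1 0 (by simp)
    simp at hi

lemma irrel_ne_top : irrel K n ≠ ⊤ := by
  intro h
  have h1 : (1 : PolyS K n) ∈ Ideal.span ((MvPolynomial.X : Fin (n+1) → _) '' Set.univ) := by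
    rw [Set.image_univ]; change (1 : PolyS K n) ∈ irrel K n; rw [h]; trivial
  rw [MvPolynomial.mem_ideal_span_X_image] at h1
  obtain ⟨i, _, hi⟩ := h1 0 (by simp)
  simp at hi

lemma V_self {i : ℕ} (hi : i + 2 ≤ n) : V (irrel K n) (i+1) (PolyS K n) := by
  rw [← bridgeV, bridge]
  intro t x
  refine ⟨t, le_rfl, ?_⟩
  have : Subsingleton (Abelian.Ext (ModuleCat.of (PolyS K n) (PolyS K n ⧸ (irrel K n)^t))
    (ModuleCat.of (PolyS K n) (PolyS K n)) (i+1+1)) := by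
    refine ModuleCat.subsingleton_ext_of_exists_isRegular (irrel K n) _ ?_ _ ?_ _ ?_ X_regular (i+1+1) ?_
    · change Module.support (PolyS K n) (PolyS K n ⧸ (irrel K n)^t) ⊆ _
      rw [Module.support_eq_zeroLocus, Ideal.annihilator_quotient, PrimeSpectrum.zeroLocus_subset_zeroLocus_iff]
      intro x hx
      exact ⟨t, Ideal.pow_mem_pow hx t⟩
    · rw [lt_top_iff_ne_top]
      change irrel K n • (⊤ : Ideal (PolyS K n)) ≠ ⊤
      rw [smul_eq_mul, Ideal.mul_top]
      exact irrel_ne_top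
    · intro r hr
      simp only [List.mem_map] at hr
      obtain ⟨j, _, rfl⟩ := hr
      exact Ideal.subset_span ⟨j, rfl⟩
    · simp; omega
  rw [Subsingleton.elim x 0, Abelian.Ext.comp_zero]

lemma V_free {i : ℕ} (hi : i + 2 ≤ n) (F : Type) [AddCommGroup F] [Module (PolyS K n) F]
    [Module.Free (PolyS K n) F] [Module.Finite (PolyS K n) F] : V (irrel K n) (i+1) F := by
  let b := Module.finBasis (PolyS K n) F
  exact V_of_equiv b.equivFun.symm (V_pi _ (V_self hi) _)
end freeV
end W2

namespace W2

section local_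
variable {R : Type} [CommRing R] {J : Ideal R}

/-- locally, outside of the point `J`, there is an invertible function with property `Q`. -/
def Loc (J : Ideal R) (Q : R → Prop) : Prop := ∀ p : Ideal R, p.IsPrime → p ≠ J → ∃ s, s ∉ p ∧ Q s

lemma Loc.imp {Q Q' : R → Prop} (h : Loc J Q) (hh : ∀ s, Q s → Q' s) : Loc J Q' :=
  fun p hp hpJ => let ⟨s, hs, hq⟩ := h p hp hpJ; ⟨s, hs, hh s hq⟩

lemma Loc.imp_sq {Q Q' : R → Prop} (h : Loc J Q) (hh : ∀ s, Q s → Q' (s * s)) : Loc J Q' :=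
  fun p hp hpJ => let ⟨s, hs, hq⟩ := h p hp hpJ
    ⟨s * s, fun hm => hs ((hp.mem_or_mem hm).elim id id), hh s hq⟩

lemma Loc.imp₂ {Q Q' Q'' : R → Prop} (h : Loc J Q) (h' : Loc J Q')
    (hh : ∀ s s', Q s → Q' s' → Q'' (s * s')) : Loc J Q'' :=
  fun p hp hpJ => let ⟨s, hs, hq⟩ := h p hp hpJ
    let ⟨s', hs', hq'⟩ := h' p hp hpJ
    ⟨s * s', fun hm => (hp.mem_or_mem hm).elim hs hs', hh s s' hq hq'⟩

variable [IsNoetherianRing R]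

lemma pow_le_of_loc (I : Ideal R) (h : Loc J (fun s => s ∈ I)) : ∃ c, J ^ c ≤ I := by
  apply Ideal.exists_pow_le_of_le_radical_of_fg _ (IsNoetherian.noetherian J)
  rw [Ideal.radical_eq_sInf]
  refine le_sInf ?_
  rintro p ⟨hI, hp⟩
  by_contra hne
  obtain ⟨s, hs, hq⟩ := h p hp (fun h => hne (h ▸ le_rfl))
  exact hs (hI hq)

lemma tors_of_loc {N : Type} [AddCommGroup N] [Module R N]
    (h : ∀ x : N, Loc J (fun s => s • x = 0)) : Tors J N := by
  intro x
  obtain ⟨c, hc⟩ := pow_le_of_loc (LinearMap.ker (LinearMap.toSpanSingleton R N x)) (J := J)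
    ((h x).imp (fun s hs => by simpa using hs))
  exact ⟨c, fun a ha => by simpa using hc ha⟩

lemma V_iff_of_loc {M N : Type} [AddCommGroup M] [Module R M] [AddCommGroup N] [Module R N]
    (f : M →ₗ[R] N) (hk : ∀ x, f x = 0 → Loc J (fun s => s • x = 0))
    (hc : ∀ y, Loc J (fun s => ∃ x, f x = s • y)) (i : ℕ) :
    V J (i+1) M ↔ V J (i+1) N := by
  refine V_iff_of_tors f (tors_of_loc ?_) (tors_of_loc ?_) i
  · rintro ⟨x, hx⟩
    exact (hk x hx).imp fun s hs => Subtype.ext hs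
  · intro y
    obtain ⟨y, rfl⟩ := Submodule.Quotient.mk_surjective _ y
    refine (hc y).imp ?_
    rintro s ⟨x, hx⟩
    rw [← Submodule.Quotient.mk_smul, Submodule.Quotient.mk_eq_zero]
    exact ⟨x, hx⟩

end local_

section wedge
variable {R : Type} [CommRing R] {M M' N : Type} [AddCommGroup M] [Module R M]
  [AddCommGroup M'] [Module R M'] [AddCommGroup N] [Module R N]

lemma upd0 {X : Type} (x y z : X) : Function.update ![x, y] 0 z = ![z, y] := by
  ext i; fin_cases i <;> simp

lemma upd1 {X : Type} (x y z : X) : Function.update ![x, y] 1 z = ![x, z] := by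
  ext i; fin_cases i <;> simp

/-- the wedge product -/
def wd : M →ₗ[R] M →ₗ[R] ⋀[R]^2 M :=
  LinearMap.mk₂ R (fun x y => exteriorPower.ιMulti R 2 ![x, y])
    (fun x x' y => by
      have := (exteriorPower.ιMulti R 2 (M := M)).map_update_add ![x, y] 0 x x'
      rwa [upd0, upd0, upd0] at this)
    (fun c x y => by
      have := (exteriorPower.ιMulti R 2 (M := M)).map_update_smul ![x, y] 0 c x
      rwa [upd0, upd0] at this)
    (fun x y y' => by
      have := (exteriorPower.ιMulti R 2 (M := M)).map_update_add ![x, y] 1 y y'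
      rwa [upd1, upd1, upd1] at this)
    (fun c x y => by
      have := (exteriorPower.ιMulti R 2 (M := M)).map_update_smul ![x, y] 1 c y
      rwa [upd1, upd1] at this)

lemma wd_self (x : M) : wd (R := R) x x = 0 := by
  change exteriorPower.ιMulti R 2 ![x, x] = 0
  exact (exteriorPower.ιMulti R 2 (M := M)).map_eq_zero_of_eq ![x,x] (i := 0) (j := 1) rfl (by decide)

lemma wd_swap (x y : M) : wd (R := R) y x = - wd x y := by
  have := wd_self (R := R) (x + y)
  simp only [map_add, LinearMap.add_apply, wd_self, zero_add, add_zero] at this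
  exact eq_neg_of_add_eq_zero_left this

lemma wd_hom_ext {f g : ⋀[R]^2 M →ₗ[R] N} (h : ∀ x y, f (wd x y) = g (wd x y)) : f = g := by
  apply exteriorPower.linearMap_ext
  ext v
  have hv : v = ![v 0, v 1] := by ext i; fin_cases i <;> rfl
  rw [hv]
  exact h (v 0) (v 1)

/-- lifting alternating bilinear maps to the second exterior power -/
def wl (b : M →ₗ[R] M →ₗ[R] N) (hb : ∀ x, b x x = 0) : ⋀[R]^2 M →ₗ[R] N :=
  exteriorPower.alternatingMapLinearEquiv
    { toFun := fun v => b (v 0) (v 1)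
      map_update_add' := by
        intro _ v i x y
        fin_cases i <;> simp
      map_update_smul' := by
        intro _ v i c x
        fin_cases i <;> simp
      map_eq_zero_of_eq' := by
        intro v i j hij hne
        fin_cases i <;> fin_cases j <;> simp_all }

@[simp] lemma wl_wd (b : M →ₗ[R] M →ₗ[R] N) (hb : ∀ x, b x x = 0) (x y : M) :
    wl b hb (wd x y) = b x y := by
  change exteriorPower.alternatingMapLinearEquiv _ (exteriorPower.ιMulti R 2 ![x, y]) = _
  rw [exteriorPower.alternatingMapLinearEquiv_apply_ιMulti]
  rfl

/-- functoriality of the second exterior power -/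
def wm (f : M →ₗ[R] N) : ⋀[R]^2 M →ₗ[R] ⋀[R]^2 N :=
  wl (wd.compl₁₂ f f) (fun x => by simp [wd_self])

@[simp] lemma wm_wd (f : M →ₗ[R] N) (x y : M) : wm f (wd x y) = wd (f x) (f y) := by
  simp [wm]

lemma wm_comp_smul {f : M →ₗ[R] N} {f' : N →ₗ[R] M} {s : R} (h : ∀ x, f' (f x) = s • x)
    (x : ⋀[R]^2 M) : wm f' (wm f x) = (s * s) • x := by
  have : wm f' ∘ₗ wm f = (s * s) • LinearMap.id := by
    apply wd_hom_ext
    intro x y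
    simp [h, mul_smul]
  exact LinearMap.congr_fun this x

end wedge

section wedgeLemma
variable {R : Type} [CommRing R] {J : Ideal R}
  {M M' N : Type} [AddCommGroup M] [Module R M]
  [AddCommGroup M'] [Module R M'] [AddCommGroup N] [Module R N]

/-- local splitting data -/
def Spl (h : M' →ₗ[R] M) (g : M →ₗ[R] N) (s : R) : Prop :=
  ∃ (r : M →ₗ[R] M') (σ : N →ₗ[R] M), (∀ a, r (h a) = s • a) ∧ (∀ b, g (σ b) = s • b) ∧
    (∀ m, h (r m) + σ (g m) = s • m)

/-- `φ : M' ⊗ M → Λ² M` -/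
def phi (h : M' →ₗ[R] M) : M' ⊗[R] M →ₗ[R] ⋀[R]^2 M := TensorProduct.lift (wd.comp h)

@[simp] lemma phi_tmul (h : M' →ₗ[R] M) (a : M') (m : M) : phi h (a ⊗ₜ m) = wd (h a) m := by
  simp [phi]

/-- the local map `Λ² M → M' ⊗ N` -/
def rho (r : M →ₗ[R] M') (g : M →ₗ[R] N) : ⋀[R]^2 M →ₗ[R] M' ⊗[R] N :=
  wl ((TensorProduct.mk R M' N).compl₁₂ r g - ((TensorProduct.mk R M' N).compl₁₂ r g).flip)
    (fun x => by simp)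

@[simp] lemma rho_wd (r : M →ₗ[R] M') (g : M →ₗ[R] N) (x y : M) :
    rho r g (wd x y) = r x ⊗ₜ g y - r y ⊗ₜ g x := by
  simp [rho]


lemma sub_lemma [IsNoetherianRing R] {L Q X Y : Type} [AddCommGroup L] [Module R L] [AddCommGroup Q] [Module R Q]
    [AddCommGroup X] [Module R X] [AddCommGroup Y] [Module R Y]
    (w : L →ₗ[R] Q) (ψ : X →ₗ[R] Q) (θ : X →ₗ[R] Y)
    (ha : ∀ x, w x = 0 → Loc J (fun s => s • x = 0))
    (hb : ∀ x, θ x = 0 → Loc J (fun s => s • ψ x ∈ LinearMap.range w))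
    (hc : ∀ x, ψ x ∈ LinearMap.range w → Loc J (fun s => s • θ x = 0))
    (hd : ∀ y, Loc J (fun s => ∃ x, θ x = s • y))
    (he : ∀ q, Loc J (fun s => ∃ x, ψ x - s • q ∈ LinearMap.range w))
    (i : ℕ) (hL : V J (i+1) L) (hY : V J (i+1) Y) : V J (i+1) Q := by
  let T : Submodule R Q := LinearMap.range w
  have hT : V J (i+1) T := by
    refine (V_iff_of_loc (N := T) w.rangeRestrict ?_ ?_ i).1 hL
    · intro x hx
      exact ha x (congrArg Subtype.val hx)
    · intro y
      obtain ⟨x, hx⟩ := w.surjective_rangeRestrict y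
      intro p hp _
      exact ⟨1, hp.one_notMem, x, by rw [hx, one_smul]⟩
  suffices hC : V J (i+1) (Q ⧸ T) by
    refine V_mid T.subtype T.mkQ T.injective_subtype T.mkQ_surjective ?_ hT hC
    intro x
    rw [Submodule.mkQ_apply, Submodule.Quotient.mk_eq_zero]
    simp
  let Ψ : X →ₗ[R] Q ⧸ T := T.mkQ ∘ₗ ψ
  have hΨ : ∀ x, Ψ x = 0 ↔ ψ x ∈ LinearMap.range w := by
    intro x
    change T.mkQ (ψ x) = 0 ↔ _
    rw [Submodule.mkQ_apply, Submodule.Quotient.mk_eq_zero]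
  let D : Submodule R ((Q ⧸ T) × Y) := LinearMap.range (Ψ.prod θ)
  have hD : V J (i+1) D := by
    refine (V_iff_of_loc (M := D) ((LinearMap.snd R (Q ⧸ T) Y) ∘ₗ D.subtype) ?_ ?_ i).2 hY
    · rintro ⟨_, x, rfl⟩ hx
      replace hx : θ x = 0 := hx
      refine (hb x hx).imp ?_
      intro s hs
      apply Subtype.ext
      refine Prod.ext ?_ ?_
      · change s • Ψ x = 0
        rw [← map_smul, hΨ, map_smul]
        exact hs
      · change s • θ x = 0
        rw [hx, smul_zero]
    · intro y
      refine (hd y).imp ?_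
      rintro s ⟨x, hx⟩
      exact ⟨⟨_, x, rfl⟩, hx⟩
  refine (V_iff_of_loc (M := D) ((LinearMap.fst R (Q ⧸ T) Y) ∘ₗ D.subtype) ?_ ?_ i).1 hD
  · rintro ⟨_, x, rfl⟩ hx
    replace hx : Ψ x = 0 := hx
    refine (hc x ((hΨ x).1 hx)).imp ?_
    intro s hs
    apply Subtype.ext
    refine Prod.ext ?_ ?_
    · change s • Ψ x = 0
      rw [hx, smul_zero]
    · exact hs
  · intro y
    obtain ⟨y, rfl⟩ := T.mkQ_surjective y
    refine (he y).imp ?_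
    rintro s ⟨x, hx⟩
    refine ⟨⟨_, x, rfl⟩, ?_⟩
    change T.mkQ (ψ x) = _
    rw [← map_smul, ← sub_eq_zero, ← map_sub, Submodule.mkQ_apply, Submodule.Quotient.mk_eq_zero]
    exact hx

lemma sub_lemma2 [IsNoetherianRing R] {L L₂ L₃ X Y : Type} [AddCommGroup L] [Module R L] [AddCommGroup L₂] [Module R L₂]
    [AddCommGroup L₃] [Module R L₃]
    [AddCommGroup X] [Module R X] [AddCommGroup Y] [Module R Y]
    (w : L →ₗ[R] L₂) (g : L₂ →ₗ[R] L₃) (ψ : X →ₗ[R] L₂) (θ : X →ₗ[R] Y)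
    (hgw : ∀ x, g (w x) = 0) (hgψ : ∀ x, g (ψ x) = 0)
    (ha : ∀ x, w x = 0 → Loc J (fun s => s • x = 0))
    (hb : ∀ x, θ x = 0 → Loc J (fun s => s • ψ x ∈ LinearMap.range w))
    (hc : ∀ x, ψ x ∈ LinearMap.range w → Loc J (fun s => s • θ x = 0))
    (hd : ∀ y, Loc J (fun s => ∃ x, θ x = s • y))
    (he : ∀ q, g q = 0 → Loc J (fun s => ∃ x, ψ x - s • q ∈ LinearMap.range w))
    (hg : ∀ q, Loc J (fun s => ∃ x, g x = s • q))
    (i : ℕ) (hL : V J (i+1) L) (hY : V J (i+1) Y) (hL3 : V J (i+1) L₃) : V J (i+1) L₂ := by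
  -- the range of `g`
  have hr : V J (i+1) (LinearMap.range g) := by
    refine (V_iff_of_loc (LinearMap.range g).subtype ?_ ?_ i).2 hL3
    · intro x hx p hp _
      have : x = 0 := Subtype.ext hx
      exact ⟨1, hp.one_notMem, by simp [this]⟩
    · intro y
      refine (hg y).imp ?_
      rintro s ⟨x, hx⟩
      exact ⟨⟨_, x, rfl⟩, hx⟩
  let Q : Submodule R L₂ := LinearMap.ker g
  have hQ : V J (i+1) Q := by
    have mem : ∀ y : Q, (y : L₂) ∈ LinearMap.range w → y ∈ LinearMap.range (w.codRestrict Q hgw) := by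
      rintro y ⟨x, hx⟩; exact ⟨x, Subtype.ext hx⟩
    refine sub_lemma (w.codRestrict Q hgw) (ψ.codRestrict Q hgψ) θ ?_ ?_ ?_ hd ?_ i hL hY
    · exact fun x hx => ha x (congrArg Subtype.val hx)
    · exact fun x hx => (hb x hx).imp fun s hs => mem _ hs
    · rintro x ⟨y, hy⟩
      exact hc x ⟨y, congrArg Subtype.val hy⟩
    · rintro ⟨q, hq⟩
      refine (he q hq).imp ?_
      rintro s ⟨x, hx⟩
      exact ⟨x, mem _ hx⟩
  refine V_mid Q.subtype g.rangeRestrict Q.injective_subtype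
      g.surjective_rangeRestrict ?_ hQ hr
  intro x
  simp [Subtype.ext_iff, Q]

theorem wedge_lemma [IsNoetherianRing R] (h : M' →ₗ[R] M) (g : M →ₗ[R] N) (hgh : ∀ a, g (h a) = 0)
    (hloc : Loc J (Spl h g)) (i : ℕ) (h1 : V J (i+1) (⋀[R]^2 M')) (h2 : V J (i+1) (M' ⊗[R] N))
    (h3 : V J (i+1) (⋀[R]^2 N)) : V J (i+1) (⋀[R]^2 M) := by
  -- general identities
  have id1 : ∀ x, wm g (wm h x) = 0 := by
    have : wm g ∘ₗ wm h = 0 := by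
      apply wd_hom_ext; intro x y; simp [hgh]
    exact fun x => LinearMap.congr_fun this x
  have id2 : ∀ x, wm g (phi h x) = 0 := by
    have : wm g ∘ₗ phi h = 0 := by
      apply TensorProduct.ext'; intro x y; simp [hgh]
    exact fun x => LinearMap.congr_fun this x
  have id3 : ∀ x, phi h ((h.lTensor M') x) ∈ LinearMap.range (wm h) := by
    intro x
    induction x using TensorProduct.induction_on with
    | zero => simp
    | tmul a b => exact ⟨wd a b, by simp⟩
    | add x y hx hy => simpa using Submodule.add_mem _ hx hy
  refine sub_lemma2 (wm h) (wm g) (phi h) (g.lTensor M') id1 id2 ?_ ?_ ?_ ?_ ?_ ?_ i h1 h2 h3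
  · intro x hx
    refine hloc.imp_sq ?_
    rintro s ⟨r, σ, hr, -, -⟩
    rw [← wm_comp_smul hr, hx, map_zero]
  · intro x hx
    refine hloc.imp ?_
    rintro s ⟨r, σ, hr, hσ, hrσ⟩
    rw [← map_smul]
    have : s • x = h.lTensor M' (r.lTensor M' x) + σ.lTensor M' (g.lTensor M' x) := by
      have : (s • LinearMap.id : M' ⊗[R] M →ₗ[R] M' ⊗[R] M) =
          h.lTensor M' ∘ₗ r.lTensor M' + σ.lTensor M' ∘ₗ g.lTensor M' := by
        apply TensorProduct.ext'
        intro a b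
        simp only [LinearMap.smul_apply, LinearMap.id_apply, LinearMap.add_apply,
          LinearMap.comp_apply, LinearMap.lTensor_tmul, ← TensorProduct.tmul_add, hrσ,
          TensorProduct.tmul_smul]
      exact LinearMap.congr_fun this x
    rw [this, hx, map_zero, add_zero]
    exact id3 _
  · intro x hx
    refine hloc.imp ?_
    rintro s ⟨r, σ, hr, hσ, hrσ⟩
    obtain ⟨z, hz⟩ := hx
    have e1 : rho r g ∘ₗ wm h = 0 := by
      apply wd_hom_ext; intro x y; simp [hgh]
    have e2 : rho r g ∘ₗ phi h = s • g.lTensor M' := by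
      apply TensorProduct.ext'; intro x y; simp [hgh, hr, TensorProduct.smul_tmul']
    have e3 := LinearMap.congr_fun e1 z
    have e4 := LinearMap.congr_fun e2 x
    simp only [LinearMap.comp_apply] at e3 e4
    rw [← hz, e3] at e4
    exact e4.symm
  · intro y
    refine hloc.imp ?_
    rintro s ⟨r, σ, hr, hσ, hrσ⟩
    refine ⟨σ.lTensor M' y, ?_⟩
    have : g.lTensor M' ∘ₗ σ.lTensor M' = s • LinearMap.id := by
      apply TensorProduct.ext'
      intro a b
      simp [hσ]
    exact LinearMap.congr_fun this y
  · intro y hy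
    refine hloc.imp_sq ?_
    rintro s ⟨r, σ, hr, hσ, hrσ⟩
    have e : (s * s) • LinearMap.id = wm h ∘ₗ wm r + phi h ∘ₗ σ.lTensor M' ∘ₗ rho r g
        + wm σ ∘ₗ wm g := by
      apply wd_hom_ext
      intro x y
      simp only [LinearMap.smul_apply, LinearMap.id_apply, LinearMap.add_apply,
        LinearMap.comp_apply, wm_wd, rho_wd, map_sub, LinearMap.lTensor_tmul, phi_tmul]
      have : (s * s) • wd (R := R) x y = wd (s • x) (s • y) := by simp [mul_smul]
      rw [this, ← hrσ, ← hrσ]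
      simp only [map_add, LinearMap.add_apply]
      rw [wd_swap (h (r y)) (σ (g x))]
      abel
    have e' := LinearMap.congr_fun e y
    simp only [LinearMap.smul_apply, LinearMap.id_apply, LinearMap.add_apply,
        LinearMap.comp_apply, hy, map_zero, add_zero] at e'
    refine ⟨σ.lTensor M' (rho r g y), - wm r y, ?_⟩
    rw [e', map_neg]
    abel
  · intro y
    refine hloc.imp_sq ?_
    rintro s ⟨r, σ, -, hσ, -⟩
    exact ⟨wm σ y, wm_comp_smul hσ y⟩

end wedgeLemma
end W2

namespace W2

section line
variable {R : Type} [CommRing R] [IsDomain R] [IsNoetherianRing R] [UniqueFactorizationMonoid R]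
  {J : Ideal R} {L : Type} [AddCommGroup L] [Module R L]

/-- a module which is locally a line bundle outside `J` over a UFD is trivial up to torsion. -/
lemma line_trivial (hJ : J ≠ ⊥)
    (hL : Loc J (fun s => ∃ (u : L →ₗ[R] R) (v : R →ₗ[R] L), (∀ x, v (u x) = s • x) ∧
      (∀ a, u (v a) = s * a))) (i : ℕ) (hR : V J (i+1) R) : V J (i+1) L := by
  have hL' : Loc J (fun s => s ≠ 0 ∧ ∃ (u : L →ₗ[R] R) (v : R →ₗ[R] L), (∀ x, v (u x) = s • x) ∧
      (∀ a, u (v a) = s * a)) := by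
    intro p hp hpJ
    obtain ⟨s, hs, h⟩ := hL p hp hpJ
    exact ⟨s, hs, fun h0 => hs (h0 ▸ p.zero_mem), h⟩
  obtain ⟨s0, hs0, u0, v0, huv0, hvu0⟩ := hL ⊥ Ideal.isPrime_bot hJ.symm
  have hs0 : s0 ≠ 0 := hs0
  let x0 := v0 1
  have hx0 : u0 x0 ≠ 0 := by simpa [x0, hvu0] using hs0
  -- property of maps
  let Pr : (L →ₗ[R] R) → Prop := fun u => (∀ x, u x = 0 → Loc J (fun s => s • x = 0))
  have hPu0 : Pr u0 := by
    intro x hx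
    have h1 : s0 • x = 0 := by rw [← huv0, hx, map_zero]
    refine hL.imp ?_
    rintro s ⟨u, v, huv, hvu⟩
    have h2 : u x = 0 := by
      have := congrArg u h1
      simpa [hs0] using this
    rw [← huv, h2, map_zero]
  have key : ∀ a : R, ∀ u : L →ₗ[R] R, Pr u → u x0 ≠ 0 → u x0 = a →
      ∃ u' : L →ₗ[R] R, Pr u' ∧ u' x0 ≠ 0 ∧ ∀ π : R, Prime π → ∃ x, ¬ π ∣ u' x := by
    intro a
    refine WellFounded.induction (wellFounded_dvdNotUnit (α := R)) (C := fun a => ∀ u : L →ₗ[R] R, Pr u → u x0 ≠ 0 → u x0 = a →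
      ∃ u' : L →ₗ[R] R, Pr u' ∧ u' x0 ≠ 0 ∧ ∀ π : R, Prime π → ∃ x, ¬ π ∣ u' x) a ?_
    · intro a ih
      intro u hu hux hua
      by_cases H : ∀ π : R, Prime π → ∃ x, ¬ π ∣ u x
      · exact ⟨u, hu, hux, H⟩
      · push Not at H
        obtain ⟨π, hπ, hdvd⟩ := H
        choose w hw using hdvd
        let u' : L →ₗ[R] R :=
          { toFun := w
            map_add' := fun x y => by
              apply mul_left_cancel₀ hπ.ne_zero
              rw [mul_add, ← hw, ← hw, ← hw, map_add]
            map_smul' := fun c x => by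
              apply mul_left_cancel₀ hπ.ne_zero
              rw [RingHom.id_apply, smul_eq_mul, mul_left_comm, ← hw, ← hw, map_smul, smul_eq_mul] }
        have hu' : ∀ x, u x = π * u' x := hw
        have hne : u' x0 ≠ 0 := fun h => hux (by rw [hu', h, mul_zero])
        refine ih (u' x0) ?_ u' ?_ hne rfl
        · refine ⟨hne, π, hπ.not_unit, ?_⟩
          rw [← hua, hu', mul_comm]
        · intro x hx
          exact hu x (by rw [hu', hx, mul_zero])
  obtain ⟨u, hu, hux, hprime⟩ := key _ u0 hPu0 hx0 rfl
  refine (V_iff_of_loc u hu ?_ i).2 hR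
  intro y p hp hpJ
  suffices ∃ x, u x ∉ p by
    obtain ⟨x, hx⟩ := this
    exact ⟨u x, hx, y • x, by rw [map_smul, smul_eq_mul, smul_eq_mul, mul_comm]⟩
  by_contra! hall
  obtain ⟨s, hs, hsne, up, vp, huv, hvu⟩ := hL' p hp hpJ
  have eq : ∀ x, s * u x = up x * u (vp 1) := by
    intro x
    rw [← smul_eq_mul, ← map_smul, ← huv, ← smul_eq_mul, ← map_smul, ← map_smul]
    simp
  have ha : u (vp 1) ≠ 0 := by
    intro h
    have := eq x0
    rw [h, mul_zero] at this
    exact (mul_ne_zero hsne hux) this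
  obtain ⟨F, hF, hass⟩ := UniqueFactorizationMonoid.exists_prime_factors _ ha
  have hmem : F.prod ∈ p := by
    obtain ⟨w, hw⟩ := hass.symm
    rw [← hw]
    exact p.mul_mem_right _ (hall _)
  obtain ⟨π, hπ, hπp⟩ := (hp.multiset_prod_mem_iff_exists_mem F).1 hmem
  obtain ⟨x, hx⟩ := hprime π (hF π hπ)
  have hd : π ∣ u (vp 1) := (Multiset.dvd_prod hπ).trans hass.dvd
  have h1 : π ∣ s * u x := by rw [eq]; exact hd.mul_left _
  rcases (hF π hπ).dvd_or_dvd h1 with h | h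
  · obtain ⟨c, rfl⟩ := h
    exact hs (p.mul_mem_right _ hπp)
  · exact hx h

end line

section misc
variable {R : Type} [CommRing R] {J : Ideal R}
  {M N : Type} [AddCommGroup M] [Module R M] [AddCommGroup N] [Module R N]

/-- local isomorphism data -/
def Iso (M N : Type) [AddCommGroup M] [Module R M] [AddCommGroup N] [Module R N] (s : R) : Prop :=
  ∃ (u : M →ₗ[R] N) (v : N →ₗ[R] M), (∀ x, v (u x) = s • x) ∧ (∀ y, u (v y) = s • y)

/-- `Λ² R² = R` -/
lemma Iso_two (s : R) (h : Iso M (Fin 2 → R) s) :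
    ∃ (u : ⋀[R]^2 M →ₗ[R] R) (v : R →ₗ[R] ⋀[R]^2 M), (∀ x, v (u x) = (s * s) • x) ∧
      (∀ a, u (v a) = (s * s) * a) := by
  obtain ⟨u, v, huv, hvu⟩ := h
  let bd : (Fin 2 → R) →ₗ[R] (Fin 2 → R) →ₗ[R] R :=
    LinearMap.mk₂ R (fun x y => x 0 * y 1 - x 1 * y 0)
      (fun x x' y => by simp; ring) (fun c x y => by simp; ring)
      (fun x x' y => by simp; ring) (fun c x y => by simp; ring)
  let d : ⋀[R]^2 (Fin 2 → R) →ₗ[R] R := wl bd (fun x => by simp [bd]; ring)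
  let e : R →ₗ[R] ⋀[R]^2 (Fin 2 → R) :=
    LinearMap.toSpanSingleton R _ (wd (Pi.single 0 1) (Pi.single 1 1))
  have hde : ∀ a, d (e a) = a := by
    intro a
    simp [d, e, bd]
  have hed : ∀ x, e (d x) = x := by
    have : e ∘ₗ d = LinearMap.id := by
      apply wd_hom_ext
      intro x y
      have hx : ∀ x : Fin 2 → R, x = x 0 • Pi.single 0 1 + x 1 • Pi.single 1 1 := by
        intro x; ext i; fin_cases i <;> simp
      conv_rhs => rw [hx x, hx y]
      simp only [LinearMap.comp_apply, LinearMap.id_apply, map_add, LinearMap.add_apply, map_smul,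
        LinearMap.smul_apply, wd_self, smul_zero, zero_add, add_zero]
      rw [wd_swap (Pi.single 0 1) (Pi.single 1 1)]
      simp only [d, wl_wd, bd, LinearMap.mk₂_apply, e, LinearMap.toSpanSingleton_apply]
      module
    exact fun x => LinearMap.congr_fun this x
  refine ⟨d ∘ₗ wm u, wm v ∘ₗ e, ?_, ?_⟩
  · intro x
    simp only [LinearMap.comp_apply, hed]
    exact wm_comp_smul huv x
  · intro a
    simp only [LinearMap.comp_apply]
    rw [wm_comp_smul hvu, map_smul, hde, smul_eq_mul]

lemma Iso_of_inv (f : M →ₗ[R] N) (s : R) (hk : ∀ x, f x = 0 → s • x = 0)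
    (hc : ∀ y, ∃ x, f x = s • y) :
    ∃ f' : N →ₗ[R] M, (∀ x, f' (f x) = (s * s) • x) ∧ (∀ y, f (f' y) = (s * s) • y) := by
  choose w hw using hc
  have uni : ∀ x x', f x = f x' → s • x = s • x' := by
    intro x x' h
    rw [← sub_eq_zero, ← smul_sub]
    exact hk _ (by rw [map_sub, h, sub_self])
  refine ⟨{ toFun := fun y => s • w y, map_add' := ?_, map_smul' := ?_ }, ?_, ?_⟩
  · intro x y
    rw [← smul_add]
    exact uni _ _ (by rw [map_add, hw, hw, hw, smul_add])
  · intro c x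
    rw [RingHom.id_apply, smul_comm]
    exact uni _ _ (by rw [map_smul, hw, hw, smul_comm])
  · intro x
    change s • w (f x) = _
    rw [mul_smul]
    exact uni _ _ (by rw [hw, map_smul])
  · intro y
    change f (s • w y) = _
    rw [map_smul, hw, mul_smul]

lemma Spl_of_retraction {M' : Type} [AddCommGroup M'] [Module R M'] (h : M' →ₗ[R] M)
    (g : M →ₗ[R] N) (hg : Function.Surjective g) (hex : Function.Exact h g) (s : R)
    (r : M →ₗ[R] M') (hr : ∀ a, r (h a) = s • a) : Spl h g s := by
  let k : M →ₗ[R] M := s • LinearMap.id - h ∘ₗ r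
  have hk : LinearMap.ker g ≤ LinearMap.ker k := by
    intro x hx
    obtain ⟨a, rfl⟩ := (hex x).1 hx
    simp [k, hr]
  let σ : N →ₗ[R] M := (LinearMap.ker g).liftQ k hk ∘ₗ (g.quotKerEquivOfSurjective hg).symm
  have hσ : ∀ m, σ (g m) = s • m - h (r m) := by
    intro m
    have : (g.quotKerEquivOfSurjective hg).symm (g m) = (LinearMap.ker g).mkQ m := by
      rw [LinearEquiv.symm_apply_eq]; rfl
    simp only [σ, LinearMap.comp_apply, LinearEquiv.coe_coe, this]
    simp [k]
  refine ⟨r, σ, hr, ?_, ?_⟩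
  · intro b
    obtain ⟨m, rfl⟩ := hg b
    rw [hσ, map_sub, map_smul, hex.apply_apply_eq_zero, sub_zero]
  · intro m
    rw [hσ]; abel

lemma Spl_of_section (g : M →ₗ[R] N) (s : R) (σ : N →ₗ[R] M) (hσ : ∀ b, g (σ b) = s • b) :
    Spl (LinearMap.ker g).subtype g s := by
  have h0 : ∀ m, (s • LinearMap.id - σ ∘ₗ g : M →ₗ[R] M) m ∈ LinearMap.ker g := by
    intro m
    simp [hσ]
  refine ⟨(s • LinearMap.id - σ ∘ₗ g).codRestrict (LinearMap.ker g) h0, σ, ?_, hσ, ?_⟩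
  · rintro ⟨a, ha⟩
    have ha' : g a = 0 := ha
    apply Subtype.ext
    simp [ha']
  · intro m
    simp

lemma section_of_free [Module.Free R N] (g : M →ₗ[R] N) (s : R) (h : ∀ y, ∃ x, g x = s • y) :
    ∃ σ : N →ₗ[R] M, ∀ b, g (σ b) = s • b := by
  choose w hw using h
  let b := Module.Free.chooseBasis R N
  refine ⟨b.constr ℕ (fun i => w (b i)), ?_⟩
  have : g ∘ₗ b.constr ℕ (fun i => w (b i)) = s • LinearMap.id := by
    apply b.ext
    intro i
    simp [Module.Basis.constr_basis, hw]
  exact fun y => LinearMap.congr_fun this y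

lemma V_tensor_right {i : ℕ} (h : V J i M) [Module.Free R N] [Module.Finite R N] :
    V J i (M ⊗[R] N) := by
  rcases subsingleton_or_nontrivial R with hR | hR
  · have : Subsingleton (M ⊗[R] N) := Module.subsingleton R _
    exact V_subsingleton i
  let b := Module.finBasis R N
  exact V_of_equiv ((TensorProduct.piScalarRight R R M (Fin (Module.finrank R N))).symm ≪≫ₗ
    (TensorProduct.congr (LinearEquiv.refl R M) b.equivFun.symm)) (V_pi i h _)

lemma V_tensor_left {i : ℕ} (h : V J i M) [Module.Free R N] [Module.Finite R N] :
    V J i (N ⊗[R] M) :=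
  V_of_equiv (TensorProduct.comm R M N) (V_tensor_right h)

lemma V_iff_of_iso [IsNoetherianRing R] (f : M →ₗ[R] N)
    (h : Loc J (fun s => ∃ f' : N →ₗ[R] M, (∀ x, f' (f x) = s • x) ∧ (∀ y, f (f' y) = s • y)))
    (i : ℕ) : V J (i+1) M ↔ V J (i+1) N := by
  refine V_iff_of_loc f ?_ ?_ i
  · intro x hx
    refine h.imp ?_
    rintro s ⟨f', h1, h2⟩
    rw [← h1, hx, map_zero]
  · intro y
    refine h.imp ?_
    rintro s ⟨f', h1, h2⟩
    exact ⟨_, h2 y⟩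

lemma V_iff_of_iso_wedge [IsNoetherianRing R] (f : M →ₗ[R] N)
    (h : Loc J (fun s => ∃ f' : N →ₗ[R] M, (∀ x, f' (f x) = s • x) ∧ (∀ y, f (f' y) = s • y)))
    (i : ℕ) : V J (i+1) (⋀[R]^2 M) ↔ V J (i+1) (⋀[R]^2 N) := by
  refine V_iff_of_iso (wm f) (h.imp_sq ?_) i
  rintro s ⟨f', h1, h2⟩
  exact ⟨wm f', wm_comp_smul h1, wm_comp_smul h2⟩

end misc
end W2

namespace W2

section descend
variable {R : Type} [CommRing R] [IsNoetherianRing R]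
  {M N : Type} [AddCommGroup M] [Module R M] [AddCommGroup N] [Module R N]
  [Module.Finite R M] [Module.Finite R N]

lemma iso_descend (p : Ideal R) [p.IsPrime]
    (e : LocalizedModule p.primeCompl M ≃ₗ[R] LocalizedModule p.primeCompl N) :
    ∃ s, s ∉ p ∧ Iso M N s := by
  have : Module.FinitePresentation R M := Module.finitePresentation_of_finite R M
  have : Module.FinitePresentation R N := Module.finitePresentation_of_finite R N
  let S := p.primeCompl
  let f := LocalizedModule.mkLinearMap S M
  let g := LocalizedModule.mkLinearMap S N
  obtain ⟨u, s, hu⟩ := Module.FinitePresentation.exists_lift_of_isLocalizedModule S g (e.toLinearMap ∘ₗ f)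
  obtain ⟨v, s', hv⟩ := Module.FinitePresentation.exists_lift_of_isLocalizedModule S f (e.symm.toLinearMap ∘ₗ g)
  have hu' : ∀ x, g (u x) = (s : R) • e (f x) := fun x => LinearMap.congr_fun hu x
  have hv' : ∀ x, f (v x) = (s' : R) • e.symm (g x) := fun x => LinearMap.congr_fun hv x
  obtain ⟨t, ht⟩ := Module.Finite.exists_smul_of_comp_eq_of_isLocalizedModule S f
    (v ∘ₗ u) (((s : R) * s') • LinearMap.id) (by
      ext x
      simp only [LinearMap.comp_apply, hv', hu', map_smul, LinearEquiv.symm_apply_apply,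
        LinearMap.smul_apply, LinearMap.id_apply, smul_smul, mul_comm])
  obtain ⟨t', ht'⟩ := Module.Finite.exists_smul_of_comp_eq_of_isLocalizedModule S g
    (u ∘ₗ v) (((s : R) * s') • LinearMap.id) (by
      ext x
      simp only [LinearMap.comp_apply, hv', hu', map_smul, LinearEquiv.apply_symm_apply,
        LinearMap.smul_apply, LinearMap.id_apply, smul_smul, mul_comm])
  have ht1 : ∀ x, (t : R) • v (u x) = (t : R) • ((s : R) * s') • x := fun x => LinearMap.congr_fun ht x
  have ht1' : ∀ x, (t' : R) • u (v x) = (t' : R) • ((s : R) * s') • x :=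
    fun x => LinearMap.congr_fun ht' x
  refine ⟨(t * t' * (s * s') : S), (t * t' * (s * s') : S).2, u, ((t : R) * t') • v, ?_, ?_⟩
  · intro x
    simp only [LinearMap.smul_apply, Submonoid.coe_mul]
    rw [mul_comm (t : R), mul_smul, ht1, ← mul_smul, ← mul_smul]
  · intro x
    simp only [LinearMap.smul_apply, Submonoid.coe_mul, map_smul]
    rw [mul_smul, ht1', ← mul_smul, ← mul_smul]

lemma section_descend (p : Ideal R) [p.IsPrime] (q : M →ₗ[R] N) (hq : Function.Surjective q)
    [Module.Free (Localization.AtPrime p) (LocalizedModule p.primeCompl N)] :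
    ∃ s, s ∉ p ∧ ∃ σ : N →ₗ[R] M, ∀ y, q (σ y) = s • y := by
  have : Module.FinitePresentation R N := Module.finitePresentation_of_finite R N
  let S := p.primeCompl
  let f := LocalizedModule.mkLinearMap S M
  let g := LocalizedModule.mkLinearMap S N
  obtain ⟨τ, hτ⟩ := Module.projective_lifting_property (R := Localization.AtPrime p)
    (LocalizedModule.map S q) (LinearMap.id) (LocalizedModule.map_surjective S q hq)
  obtain ⟨v, s, hv⟩ := Module.FinitePresentation.exists_lift_of_isLocalizedModule S f
    ((τ.restrictScalars R) ∘ₗ g)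
  have hv' : ∀ x, f (v x) = (s : R) • τ (g x) := fun x => LinearMap.congr_fun hv x
  have hτ' : ∀ x, LocalizedModule.map S q (τ x) = x := fun x => LinearMap.congr_fun hτ x
  have hm : ∀ x, LocalizedModule.map S q (f x) = g (q x) := fun x => by
    simp [f, g, LocalizedModule.map_mk]
  have hsm : ∀ (c : R) x, LocalizedModule.map S q (c • x) = c • LocalizedModule.map S q x :=
    fun c x => ((LocalizedModule.map S q).restrictScalars R).map_smul c x
  obtain ⟨t, ht⟩ := Module.Finite.exists_smul_of_comp_eq_of_isLocalizedModule S g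
    (q ∘ₗ v) ((s : R) • LinearMap.id) (by
      ext x
      simp only [LinearMap.comp_apply, ← hm, hv', hsm, hτ', map_smul,
        LinearMap.smul_apply, LinearMap.id_apply])
  have ht1 : ∀ x, (t : R) • q (v x) = (t : R) • (s : R) • x := fun x => LinearMap.congr_fun ht x
  refine ⟨(t * s : S), (t * s : S).2, (t : R) • v, ?_⟩
  intro y
  simp only [LinearMap.smul_apply, Submonoid.coe_mul, map_smul]
  rw [ht1, mul_smul]

end descend

section irr
variable {K : Type} [Field K] {n : ℕ}

lemma irrel_eq_ker : irrel K n = RingHom.ker (MvPolynomial.constantCoeff (R := K) (σ := Fin (n+1))) := by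
  ext x
  have : irrel K n = Ideal.span ((MvPolynomial.X : Fin (n+1) → _) '' Set.univ) := by
    rw [Set.image_univ]; rfl
  rw [this, MvPolynomial.mem_ideal_span_X_image, RingHom.mem_ker, MvPolynomial.constantCoeff_eq]
  constructor
  · intro h
    by_contra hne
    obtain ⟨i, _, hi⟩ := h 0 (MvPolynomial.mem_support_iff.2 hne)
    simp at hi
  · intro h m hm
    by_contra! hall
    have : m = 0 := by ext i; simpa using hall i trivial
    rw [this, MvPolynomial.mem_support_iff] at hm
    exact hm h

lemma irrel_maximal : (irrel K n).IsMaximal := by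
  rw [irrel_eq_ker]
  exact RingHom.ker_isMaximal_of_surjective _ (fun c => ⟨MvPolynomial.C c, by simp⟩)

lemma irrel_ne_bot : irrel K n ≠ ⊥ := by
  intro h
  have : (MvPolynomial.X 0 : PolyS K n) ∈ irrel K n := Ideal.subset_span ⟨0, rfl⟩
  rw [h, Ideal.mem_bot] at this
  exact MvPolynomial.X_ne_zero 0 this

lemma loc_pow (c : ℕ) : Loc (irrel K n) (fun s => s ∈ (irrel K n) ^ c) := by
  intro p hp hne
  by_contra! hall
  have h1 : (irrel K n) ^ c ≤ p := fun x hx => by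
    by_contra hx'
    exact hall x hx' hx
  have h2 : irrel K n ≤ p := hp.le_of_pow_le h1
  exact hne (irrel_maximal.eq_of_le hp.ne_top h2).symm

lemma sheafIso_loc {M N : Type} [AddCommGroup M] [Module (PolyS K n) M]
    [AddCommGroup N] [Module (PolyS K n) N] (f : M →ₗ[PolyS K n] N) (hf : IsSheafIso K n f) :
    Loc (irrel K n) (fun s => ∃ f' : N →ₗ[PolyS K n] M, (∀ x, f' (f x) = s • x) ∧
      (∀ y, f (f' y) = s • y)) := by
  obtain ⟨⟨c, hc⟩, ⟨d, hd⟩⟩ := hf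
  refine (loc_pow (max c d)).imp_sq ?_
  intro s hs
  have hsc := hc (Ideal.pow_le_pow_right (le_max_left c d) hs)
  have hsd := hd (Ideal.pow_le_pow_right (le_max_right c d) hs)
  rw [Module.mem_annihilator] at hsc hsd
  apply Iso_of_inv
  · intro x hx
    exact congrArg Subtype.val (hsc ⟨x, hx⟩)
  · intro y
    have := hsd (Submodule.Quotient.mk y)
    rwa [← Submodule.Quotient.mk_smul, Submodule.Quotient.mk_eq_zero] at this

end irr
end W2

open W2
theorem wedge2_vanishing_of_monad
    (K : Type) [Field K] (n : ℕ)
    (A B P : Type) [AddCommGroup A] [Module (PolyS K n) A]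
    [AddCommGroup B] [Module (PolyS K n) B] [AddCommGroup P] [Module (PolyS K n) P]
    (hAfree : Module.Free (PolyS K n) A) (hAfin : Module.Finite (PolyS K n) A)
    (hBfree : Module.Free (PolyS K n) B) (hBfin : Module.Finite (PolyS K n) B)
    (hP : IsBundleModule K n P)
    (hP1 : Subsingleton (Hstar K n 1 P))
    (hPn1 : Subsingleton (Hstar K n (n-1) P))
    (α : A →ₗ[PolyS K n] P) (β : P →ₗ[PolyS K n] B)
    (hβα : β.comp α = 0)
    (hαinj : Function.Injective α)
    (hsubbundle : ∀ p : PrimeSpectrum (PolyS K n), p.asIdeal ≠ irrel K n →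
      Module.Free (Localization.AtPrime p.asIdeal)
        (LocalizedModule p.asIdeal.primeCompl (P ⧸ LinearMap.range α)))
    (hβsurj : ∃ c : ℕ, (irrel K n) ^ c ≤
      Module.annihilator (PolyS K n) (B ⧸ LinearMap.range β))
    (E : Type) [AddCommGroup E] [Module (PolyS K n) E]
    (hcoh : ∃ f : MonadHomology α β →ₗ[PolyS K n] E, IsSheafIso K n f)
    (hE : IsRankTwoBundleModule K n E)
    (l : ℕ) (hl1 : 2 ≤ l) (hl2 : l ≤ n - 2)
    (hvan : Subsingleton (Hstar K n l E)) :
    Subsingleton (Hstar K n l (⋀[PolyS K n]^2 P)) := by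
  obtain ⟨i, rfl⟩ : ∃ i, l = i + 1 := ⟨l - 1, by omega⟩
  have hi : i + 2 ≤ n := by omega
  have hVE : V (irrel K n) (i+1) E := (bridgeV _ i E).1 hvan
  refine (bridgeV _ i _).2 ?_
  have hPfin := hP.finite
  have hEfin := hE.finite
  obtain ⟨f, hf⟩ := hcoh
  have hfl := sheafIso_loc f hf
  -- the line bundle `Λ² E`
  have hL : V (irrel K n) (i+1) (⋀[PolyS K n]^2 E) := by
    refine line_trivial irrel_ne_bot ?_ i (V_self hi)
    intro p hp hpJ
    have h1 := hE.locFree ⟨p, hp⟩ hpJ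
    have h2 := hE.rank2 ⟨p, hp⟩ hpJ
    have h3 : ∃ s, s ∉ p ∧ Iso E (Fin 2 → PolyS K n) s := by
      have e1 : LocalizedModule p.primeCompl E ≃ₗ[Localization.AtPrime p] (Fin 2 → Localization.AtPrime p) := by
        apply LinearEquiv.ofRankEq
        rw [h2]; simp
      have e2 : LocalizedModule p.primeCompl (Fin 2 → PolyS K n) ≃ₗ[PolyS K n] (Fin 2 → Localization.AtPrime p) :=
        IsLocalizedModule.iso p.primeCompl (LinearMap.pi fun i =>
          (Algebra.linearMap (PolyS K n) (Localization.AtPrime p)) ∘ₗ LinearMap.proj i)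
      exact iso_descend p ((e1.restrictScalars (PolyS K n)) ≪≫ₗ e2.symm)
    obtain ⟨s, hs, h4⟩ := h3
    exact ⟨s * s, fun h => (hp.mem_or_mem h).elim hs hs, Iso_two s h4⟩
  have hL' : V (irrel K n) (i+1) (⋀[PolyS K n]^2 (MonadHomology α β)) :=
    (V_iff_of_iso_wedge f hfl i).2 hL
  have hVE' : V (irrel K n) (i+1) (MonadHomology α β) := (V_iff_of_iso f hfl i).2 hVE
  -- first sequence
  let h : A →ₗ[PolyS K n] LinearMap.ker β := α.codRestrict _ (fun a => LinearMap.congr_fun hβα a)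
  let g : LinearMap.ker β →ₗ[PolyS K n] MonadHomology α β :=
    ((LinearMap.range α).comap (LinearMap.ker β).subtype).mkQ
  have hg : Function.Surjective g := Submodule.mkQ_surjective _
  have hex : Function.Exact h g := by
    intro x
    change Submodule.mkQ _ x = 0 ↔ _
    rw [Submodule.mkQ_apply, Submodule.Quotient.mk_eq_zero]
    constructor
    · rintro ⟨a, ha⟩
      exact ⟨a, Subtype.ext ha⟩
    · rintro ⟨a, rfl⟩
      exact ⟨a, rfl⟩
  have hhinj : Function.Injective h := fun a b hab => hαinj (congrArg Subtype.val hab)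
  have hVG : V (irrel K n) (i+1) (LinearMap.ker β) :=
    V_mid h g hhinj hg hex (V_free hi A) hVE'
  have hspl1 : Loc (irrel K n) (Spl h g) := by
    intro p hp hpJ
    have := hsubbundle ⟨p, hp⟩ hpJ
    obtain ⟨s, hs, σ, hσ⟩ := section_descend p (LinearMap.range α).mkQ (Submodule.mkQ_surjective _)
    refine ⟨s, hs, ?_⟩
    have hmem : ∀ m, ∃ a, α a = s • m - σ ((LinearMap.range α).mkQ m) := by
      intro m
      have : s • m - σ ((LinearMap.range α).mkQ m) ∈ LinearMap.range α := by
        rw [← Submodule.Quotient.mk_eq_zero, ← Submodule.mkQ_apply, map_sub, hσ, map_smul, sub_self]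
      exact this
    choose r hr using hmem
    let r' : P →ₗ[PolyS K n] A :=
      { toFun := r
        map_add' := fun x y => hαinj (by
          rw [map_add, hr, hr, hr, map_add, map_add, smul_add]; abel)
        map_smul' := fun c x => hαinj (by
          rw [RingHom.id_apply, map_smul, hr, hr, map_smul, map_smul, smul_sub, smul_comm]) }
    refine Spl_of_retraction h g hg hex s (r' ∘ₗ (LinearMap.ker β).subtype) ?_
    intro a
    apply hαinj
    change α (r (α a)) = _
    have : (LinearMap.range α).mkQ (α a) = 0 := by
      rw [Submodule.mkQ_apply, Submodule.Quotient.mk_eq_zero]; exact ⟨a, rfl⟩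
    rw [hr, this, map_zero, sub_zero, map_smul]
  have hWG : V (irrel K n) (i+1) (⋀[PolyS K n]^2 (LinearMap.ker β)) :=
    wedge_lemma h g (fun a => hex.apply_apply_eq_zero a) hspl1 i (V_free hi _)
      (V_tensor_left hVE') hL'
  -- second sequence
  have hspl2 : Loc (irrel K n) (Spl (LinearMap.ker β).subtype β) := by
    obtain ⟨c, hc⟩ := hβsurj
    refine (loc_pow c).imp ?_
    intro s hs
    have hsc := hc hs
    rw [Module.mem_annihilator] at hsc
    obtain ⟨σ, hσ⟩ := section_of_free β s (fun y => by
      have := hsc (Submodule.Quotient.mk y)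
      rwa [← Submodule.Quotient.mk_smul, Submodule.Quotient.mk_eq_zero] at this)
    exact Spl_of_section β s σ hσ
  exact wedge_lemma _ _ (fun a => a.2) hspl2 i hWG (V_tensor_right hVG) (V_free hi _)
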